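/- Let 0 < α < 1, s ≥ 1, f ≥ 1. Consider the system of three linear equations in unknowns X0, X1, Xm: X0 = α(X1+1) + (1−α)(Xm+1); X1 = ∑_{k=1}^{s−1} α^k + (1−α)(1+Xm)·∑_{k=0}^{s−2} α^k; Xm = ∑_{k=1}^{f−1} (1−α)^k + α(1+X1)·∑_{k=0}^{f−2} (1−α)^k. If s > 1 and f > 1, then the unique solution satisfies X0 = (∑_{j=0}^{s−1} α^j)(∑_{j=0}^{f−1} (1−α)^j) / (1 − (∑_{j=1}^{s−1} α^j)(∑_{j=1}^{f−1} (1−α)^j)). -/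

import Mathlib

theorem icc_sum_aux (x : ℝ) (n : ℕ) :
    ∑ k ∈ Finset.Icc 1 n, x ^ k = x * ∑ k ∈ Finset.range n, x ^ k := by
  induction n with
  | zero => simp
  | succ n ih =>
    rw [Finset.sum_Icc_succ_top (by omega), ih, Finset.sum_range_succ]
    ring

theorem range_sum_aux (x : ℝ) (n : ℕ) :
    ∑ k ∈ Finset.range (n + 1), x ^ k = 1 + x * ∑ k ∈ Finset.range n, x ^ k := by
  rw [Finset.sum_range_succ', Finset.mul_sum]
  simp only [pow_succ, pow_zero]
  rw [add_comm]
  congr 1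
  exact Finset.sum_congr rfl (fun k _ => by ring)

/-- The three linear equations of ARF at an intermediate rate determine
`X0 = (∑_{j=0}^{s-1} α^j)(∑_{j=0}^{f-1} (1-α)^j) / (1 - (∑_{j=1}^{s-1} α^j)(∑_{j=1}^{f-1}(1-α)^j))`. -/
theorem stmt_1 (α : ℝ) (hα0 : 0 < α) (hα1 : α < 1) (s f : ℕ) (hs : 1 < s) (hf : 1 < f)
    (X0 X1 Xm : ℝ)
    (h0 : X0 = α * (X1 + 1) + (1 - α) * (Xm + 1))
    (h1 : X1 = (∑ k ∈ Finset.Icc 1 (s - 1), α ^ k)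
        + (1 - α) * (1 + Xm) * (∑ k ∈ Finset.range (s - 1), α ^ k))
    (hm : Xm = (∑ k ∈ Finset.Icc 1 (f - 1), (1 - α) ^ k)
        + α * (1 + X1) * (∑ k ∈ Finset.range (f - 1), (1 - α) ^ k)) :
    X0 = ((∑ j ∈ Finset.range s, α ^ j) * (∑ j ∈ Finset.range f, (1 - α) ^ j))
        / (1 - (∑ j ∈ Finset.Icc 1 (s - 1), α ^ j)
              * (∑ j ∈ Finset.Icc 1 (f - 1), (1 - α) ^ j)) := by
  obtain ⟨m, rfl⟩ : ∃ m, s = m + 1 := ⟨s - 1, by omega⟩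
  obtain ⟨n, rfl⟩ : ∃ n, f = n + 1 := ⟨f - 1, by omega⟩
  simp only [Nat.add_sub_cancel] at *
  rw [icc_sum_aux] at h1 hm
  rw [icc_sum_aux, icc_sum_aux, range_sum_aux, range_sum_aux]
  have gP := mul_neg_geom_sum α m
  have gQ := mul_neg_geom_sum (1 - α) n
  have ha : 0 < α ^ m := by positivity
  have hb : 0 < (1 - α) ^ n := pow_pos (by linarith) n
  have ha1 : α ^ m ≤ 1 := pow_le_one₀ hα0.le hα1.le
  have hb1 : (1 - α) ^ n ≤ 1 := pow_le_one₀ (by linarith) (by linarith)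
  generalize (∑ k ∈ Finset.range m, α ^ k) = P at *
  generalize (∑ k ∈ Finset.range n, (1 - α) ^ k) = Q at *
  have hD : α * P * ((1 - α) * Q) = (1 - α ^ m) * (1 - (1 - α) ^ n) := by
    rw [← gP, ← gQ]; ring
  have hpos : 0 < 1 - α * P * ((1 - α) * Q) := by
    rw [hD]; nlinarith
  rw [eq_div_iff hpos.ne']
  linear_combination (1 - α * P * ((1 - α) * Q)) * h0 + (α + (1 - α) * α * Q) * h1
    + (α * (1 - α) * P + (1 - α)) * hm
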